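/- Let m ≥ 4 be even and e = m/2. Then the dual code C̄_E^⊥ has dimension 1 + 3m/2 over F_2 and minimum nonzero Hamming weight 2^{m−1} − 2^{(m−2)/2}, with weight distribution: the number of codewords of weight 0 is 1; of weight 2^{m−1} − 2^{(m−2)/2} is (2^{m/2} − 1)·2^m; of weight 2^{m−1} is 2^{m+1} − 2; of weight 2^{m−1} + 2^{(m−2)/2} is (2^{m/2} − 1)·2^m; of weight 2^m is 1; and there are no codewords of any other weight. Moreover, the extended code C̄_E has length 2^m, dimension 2^m − 1 − 3m/2, and minimum nonzero Hamming weight 4. -/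

import Mathlib

open Polynomial Finset

/-- The polynomial `c₀ + c₁x + ⋯ + c_{n−1}x^{n−1}` associated to a vector. -/
noncomputable def codePoly {n : ℕ} (c : Fin n → ZMod 2) : Polynomial (ZMod 2) :=
  ∑ i : Fin n, Polynomial.C (c i) * Polynomial.X ^ (i : ℕ)

/-- The generator polynomial `g_E(x) = M_α(x) · M_{α^{1+2^e}}(x)`. -/
noncomputable def gE (m e : ℕ) (α : GaloisField 2 m) : Polynomial (ZMod 2) :=
  minpoly (ZMod 2) α * minpoly (ZMod 2) (α ^ (1 + 2 ^ e))

/-- The binary cyclic code `C_E` of length `2^m − 1` with generator polynomial `g_E`. -/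
def CE (m e : ℕ) (α : GaloisField 2 m) : Set (Fin (2 ^ m - 1) → ZMod 2) :=
  {c | gE m e α ∣ codePoly c}

/-- The extended code `C̄_E ⊆ F_2^{2^m}`: the first `2^m − 1` coordinates form a codeword
of `C_E` and all `2^m` coordinates sum to zero. -/
def CEbar (m e : ℕ) (α : GaloisField 2 m) : Set (Fin (2 ^ m) → ZMod 2) :=
  {c | (fun i : Fin (2 ^ m - 1) => c (Fin.castLE (Nat.sub_le _ _) i)) ∈ CE m e α ∧
       ∑ i, c i = 0}

/-- The dual of a set of vectors over a commutative ring, as a submodule. -/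
def dualCode {n : ℕ} {F : Type*} [CommRing F] (C : Set (Fin n → F)) :
    Submodule F (Fin n → F) where
  carrier := {y | ∀ c ∈ C, ∑ i, y i * c i = 0}
  add_mem' := by
    intro a b ha hb c hc
    have h1 := ha c hc
    have h2 := hb c hc
    simp only [Pi.add_apply, add_mul, Finset.sum_add_distrib, h1, h2, add_zero]
  zero_mem' := by intro c hc; simp
  smul_mem' := by
    intro r a ha c hc
    have h1 := ha c hc
    simp only [Pi.smul_apply, smul_eq_mul, mul_assoc, ← Finset.mul_sum, h1, mul_zero]

lemma codePoly_add {n : ℕ} (a b : Fin n → ZMod 2) :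
    codePoly (fun i => a i + b i) = codePoly a + codePoly b := by
  simp [codePoly, Finset.sum_add_distrib, add_mul]

lemma codePoly_smul {n : ℕ} (r : ZMod 2) (a : Fin n → ZMod 2) :
    codePoly (fun i => r * a i) = Polynomial.C r * codePoly a := by
  simp [codePoly, Finset.mul_sum, mul_assoc]

/-- The extended code `C̄_E`, as an `F_2`-submodule of `F_2^{2^m}`. -/
noncomputable def CEbarSub (m e : ℕ) (α : GaloisField 2 m) :
    Submodule (ZMod 2) (Fin (2 ^ m) → ZMod 2) where
  carrier := CEbar m e α
  add_mem' := by
    rintro a b ⟨ha1, ha2⟩ ⟨hb1, hb2⟩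
    refine ⟨?_, ?_⟩
    · show gE m e α ∣
        codePoly (fun i : Fin (2 ^ m - 1) => (a + b) (Fin.castLE (Nat.sub_le _ _) i))
      have h : (fun i : Fin (2 ^ m - 1) => (a + b) (Fin.castLE (Nat.sub_le _ _) i)) =
          (fun i : Fin (2 ^ m - 1) =>
            a (Fin.castLE (Nat.sub_le _ _) i) + b (Fin.castLE (Nat.sub_le _ _) i)) := rfl
      rw [h, codePoly_add]
      exact dvd_add ha1 hb1
    · simp only [Pi.add_apply, Finset.sum_add_distrib, ha2, hb2, add_zero]
  zero_mem' := by
    refine ⟨?_, by simp⟩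
    show gE m e α ∣
      codePoly (fun i : Fin (2 ^ m - 1) => (0 : Fin (2 ^ m) → ZMod 2) (Fin.castLE (Nat.sub_le _ _) i))
    have h : (fun i : Fin (2 ^ m - 1) => (0 : Fin (2 ^ m) → ZMod 2) (Fin.castLE (Nat.sub_le _ _) i)) =
        (fun _ : Fin (2 ^ m - 1) => (0 : ZMod 2)) := rfl
    rw [h]
    simp [codePoly]
  smul_mem' := by
    rintro r a ⟨ha1, ha2⟩
    refine ⟨?_, ?_⟩
    · show gE m e α ∣
        codePoly (fun i : Fin (2 ^ m - 1) => (r • a) (Fin.castLE (Nat.sub_le _ _) i))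
      have h : (fun i : Fin (2 ^ m - 1) => (r • a) (Fin.castLE (Nat.sub_le _ _) i)) =
          (fun i : Fin (2 ^ m - 1) => r * a (Fin.castLE (Nat.sub_le _ _) i)) := rfl
      rw [h, codePoly_smul]
      exact Dvd.dvd.mul_left ha1 _
    · simp only [Pi.smul_apply, smul_eq_mul, ← Finset.mul_sum, ha2, mul_zero]

/-- The sign character of `ZMod 2`. -/
def sgn (z : ZMod 2) : ℤ := if z = 0 then 1 else -1

lemma sgn_add (a b : ZMod 2) : sgn (a + b) = sgn a * sgn b := by
  revert a b; decide

lemma sgn_sq (a : ZMod 2) : sgn a * sgn a = 1 := by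
  revert a; decide

lemma zmod2_ne (z : ZMod 2) : z ≠ 0 ↔ z = 1 := by
  revert z; decide

lemma sum_sgn {ι : Type*} [Fintype ι] (y : ι → ZMod 2) :
    ∑ i, sgn (y i) = Fintype.card ι - 2 * (hammingNorm y : ℤ) := by
  have h : ∀ i, sgn (y i) = 1 - 2 * (if y i ≠ 0 then 1 else 0) := by
    intro i; unfold sgn; split_ifs <;> simp_all
  simp only [h, Finset.sum_sub_distrib, ← Finset.mul_sum, hammingNorm, Finset.sum_boole]
  simp

set_option linter.unusedSectionVars false

section field
variable {F : Type*} [Field F] [Fintype F] [Algebra (ZMod 2) F]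

/-- The absolute trace. -/
noncomputable def Tr : F →ₗ[ZMod 2] ZMod 2 := Algebra.trace (ZMod 2) F

lemma Tr_equiv (σ : F ≃ₐ[ZMod 2] F) (x : F) : Tr (σ x) = Tr x :=
  Algebra.trace_eq_of_algEquiv σ x

lemma Tr_nondeg (a : F) (h : ∀ x, Tr (a * x) = 0) : a = 0 := by
  have := (traceForm_nondegenerate (ZMod 2) F).1 a
  exact this (fun x => by simpa [Tr] using h x)

lemma sum_sgn_Tr (a : F) (ha : a ≠ 0) : ∑ x : F, sgn (Tr (a * x)) = 0 := by
  have : ∃ u, Tr (a * u) ≠ 0 := by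
    by_contra! h
    exact ha (Tr_nondeg a h)
  obtain ⟨u, hu⟩ := this
  rw [zmod2_ne] at hu
  have h := Equiv.sum_comp (Equiv.addRight u) (fun x : F => sgn (Tr (a * x)))
  simp only [Equiv.coe_addRight, mul_add, map_add, sgn_add, hu] at h
  rw [← Finset.sum_mul] at h
  have : sgn 1 = -1 := by decide
  rw [this] at h
  linarith

lemma char2 (x : F) : x + x = 0 := by
  have : (2 : F) = algebraMap (ZMod 2) F 2 := (map_ofNat _ 2).symm
  have h2 : (2 : ZMod 2) = 0 := by decide
  rw [← two_mul, this, h2, map_zero, zero_mul]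

lemma eq_of_add_zero {x y : F} (h : x + y = 0) : x = y := by
  have := char2 y
  exact add_right_cancel (h.trans this.symm)

/-- The map `x ↦ x + σ x`. -/
noncomputable def Lmap (σ : F ≃ₐ[ZMod 2] F) : F →ₗ[ZMod 2] F := LinearMap.id + σ.toLinearMap

lemma Lmap_apply (σ : F ≃ₐ[ZMod 2] F) (x : F) : Lmap σ x = x + σ x := rfl

lemma Tr_norm_eq (σ : F ≃ₐ[ZMod 2] F) (hσ : ∀ x, σ (σ x) = x) (b x : F) :
    Tr (σ b * (x * σ x)) = Tr (b * (x * σ x)) := by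
  rw [← Tr_equiv σ]; simp only [map_mul, hσ]; ring_nf

lemma ker_eq_range (σ : F ≃ₐ[ZMod 2] F) (hσ : ∀ x, σ (σ x) = x) (h1 : ∃ u, σ u ≠ u) :
    LinearMap.ker (Lmap σ) = LinearMap.range (Lmap σ) := by
  obtain ⟨u, hu⟩ := h1
  have ht : u + σ u ≠ 0 := fun h => hu (eq_of_add_zero h).symm
  ext k
  rw [LinearMap.mem_ker, LinearMap.mem_range, Lmap_apply]
  constructor
  · intro hk
    have hk := (eq_of_add_zero hk).symm
    refine ⟨k * (u + σ u)⁻¹ * u, ?_⟩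
    rw [Lmap_apply]
    simp only [map_mul, map_inv₀, map_add, hσ, hk]
    rw [add_comm (σ u) u]
    field_simp
  · rintro ⟨y, rfl⟩
    rw [Lmap_apply, map_add, hσ, add_comm (σ y) y]
    exact char2 _

lemma finrank_ker (σ : F ≃ₐ[ZMod 2] F) (hσ : ∀ x, σ (σ x) = x) (h1 : ∃ u, σ u ≠ u) :
    2 * Module.finrank (ZMod 2) (LinearMap.ker (Lmap σ)) = Module.finrank (ZMod 2) F := by
  have := LinearMap.finrank_range_add_finrank_ker (Lmap σ)
  rw [← ker_eq_range σ hσ h1] at this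
  omega

/-- The quadratic function with parameters `c, a, b`. -/
noncomputable def qf (σ : F ≃ₐ[ZMod 2] F) (c : ZMod 2) (a b x : F) : ZMod 2 :=
  c + Tr (a * x) + Tr (b * (x * σ x))

lemma qf_shift (σ : F ≃ₐ[ZMod 2] F) (hσ : ∀ x, σ (σ x) = x) (c : ZMod 2) (a b x d : F) :
    qf σ c a b x + qf σ c a b (x + d) =
      (Tr (a * d) + Tr (b * (d * σ d))) + Tr ((σ d * Lmap σ b) * x) := by
  have h2 : ∀ z : ZMod 2, z + z = 0 := by decide
  have h3 : Tr (b * (σ x * d)) = Tr (σ b * σ d * x) := by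
    rw [← Tr_equiv σ]; simp only [map_mul, hσ]; ring_nf
  have h4 : Tr ((σ d * Lmap σ b) * x) = Tr (b * (x * σ d)) + Tr (b * (σ x * d)) := by
    rw [h3, ← map_add, Lmap_apply]; ring_nf
  have h5 : Tr (b * ((x + d) * σ (x + d))) =
      Tr (b * (x * σ x)) + Tr (b * (x * σ d)) + Tr (b * (σ x * d)) + Tr (b * (d * σ d)) := by
    simp only [← map_add Tr]; rw [map_add σ]; ring_nf
  unfold qf
  rw [h4, h5, mul_add, map_add]
  linear_combination h2 c + h2 (Tr (a * x)) + h2 (Tr (b * (x * σ x)))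

lemma sum_qf_sq (σ : F ≃ₐ[ZMod 2] F) (hσ : ∀ x, σ (σ x) = x) (c : ZMod 2) (a b : F)
    (hb : Lmap σ b ≠ 0) : (∑ x, sgn (qf σ c a b x)) ^ 2 = Fintype.card F := by
  classical
  rw [sq, Finset.sum_mul_sum]
  have h1 : ∀ x, ∑ y, sgn (qf σ c a b x) * sgn (qf σ c a b y)
      = ∑ d, sgn (Tr (a * d) + Tr (b * (d * σ d))) * sgn (Tr ((σ d * Lmap σ b) * x)) := by
    intro x
    rw [← Equiv.sum_comp (Equiv.addLeft x)]
    refine Finset.sum_congr rfl fun d _ => ?_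
    rw [Equiv.coe_addLeft, ← sgn_add, qf_shift σ hσ, sgn_add]
  simp only [h1]
  rw [Finset.sum_comm]
  simp only [← Finset.mul_sum]
  rw [Finset.sum_eq_single (0 : F)]
  · simp [sgn]
  · intro d _ hd
    rw [sum_sgn_Tr, mul_zero]
    exact mul_ne_zero (by simpa using hd) hb
  · simp

lemma sum_qf_lin (σ : F ≃ₐ[ZMod 2] F) (c : ZMod 2) (a : F) (ha : a ≠ 0) :
    ∑ x, sgn (qf σ c a 0 x) = 0 := by
  simp [qf, sgn_add, ← Finset.mul_sum, sum_sgn_Tr a ha]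

lemma qf_fixed (σ : F ≃ₐ[ZMod 2] F) (hσ : ∀ x, σ (σ x) = x) (h1 : ∃ u, σ u ≠ u)
    (b x : F) (hb : Lmap σ b = 0) : Tr (b * (x * σ x)) = 0 := by
  have : b ∈ LinearMap.range (Lmap σ) := by
    rw [← ker_eq_range σ hσ h1]; exact hb
  obtain ⟨u, rfl⟩ := this
  have h2 : ∀ z : ZMod 2, z + z = 0 := by decide
  rw [Lmap_apply, add_mul, map_add, Tr_norm_eq σ hσ, h2]

/-- The encoding map. -/
noncomputable def Enc {ι : Type*} (σ : F ≃ₐ[ZMod 2] F) (X : ι → F) (B : Submodule (ZMod 2) F) :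
    (ZMod 2 × F × B) →ₗ[ZMod 2] (ι → ZMod 2) where
  toFun v i := qf σ v.1 v.2.1 v.2.2 (X i)
  map_add' v w := by
    ext i; simp only [qf, Prod.fst_add, Prod.snd_add, Submodule.coe_add, add_mul, map_add,
      Pi.add_apply]; ring
  map_smul' r v := by
    ext i; simp only [qf, Prod.smul_fst, Prod.smul_snd, Submodule.coe_smul, smul_mul_assoc,
      map_smul, Pi.smul_apply, RingHom.id_apply, smul_add]

lemma mem_dual_Enc {N : ℕ} (σ : F ≃ₐ[ZMod 2] F) (hσ : ∀ x, σ (σ x) = x) (h1 : ∃ u, σ u ≠ u)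
    (X : Fin N → F) (B : Submodule (ZMod 2) F) (hB : IsCompl (LinearMap.ker (Lmap σ)) B)
    (y : Fin N → ZMod 2) :
    y ∈ dualCode (LinearMap.range (Enc σ X B) : Set (Fin N → ZMod 2)) ↔
      (∑ i, y i = 0 ∧ ∑ i, y i • X i = 0 ∧ ∑ i, y i • (X i * σ (X i)) = 0) := by
  have key : ∀ v : ZMod 2 × F × B, ∑ i, y i * Enc σ X B v i =
      v.1 * ∑ i, y i + Tr (v.2.1 * ∑ i, y i • X i) +
        Tr ((v.2.2 : F) * ∑ i, y i • (X i * σ (X i))) := by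
    intro v
    simp only [Finset.mul_sum, map_sum, mul_smul_comm, map_smul, smul_eq_mul,
      ← Finset.sum_add_distrib]
    refine Finset.sum_congr rfl fun i _ => ?_
    simp only [Enc, LinearMap.coe_mk, AddHom.coe_mk, qf]
    ring
  constructor
  · intro h
    have h' : ∀ v, ∑ i, y i * Enc σ X B v i = 0 := fun v => h _ ⟨v, rfl⟩
    simp only [key] at h'
    refine ⟨by simpa using h' (1, 0, 0), ?_, ?_⟩
    · apply Tr_nondeg
      intro a
      rw [mul_comm]
      simpa using h' (0, a, 0)
    · apply Tr_nondeg
      intro b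
      rw [mul_comm]
      have hb : b ∈ LinearMap.ker (Lmap σ) ⊔ B := by rw [hB.sup_eq_top]; trivial
      obtain ⟨k, hk, b', hb', rfl⟩ := Submodule.mem_sup.1 hb
      have h3 := h' (0, 0, ⟨b', hb'⟩)
      have h4 : Tr (k * ∑ i, y i • (X i * σ (X i))) = 0 := by
        simp only [Finset.mul_sum, map_sum, mul_smul_comm, map_smul]
        refine Finset.sum_eq_zero fun i _ => ?_
        rw [qf_fixed σ hσ h1 _ _ hk, smul_zero]
      rw [add_mul, map_add, h4]
      simpa using h3
  · rintro ⟨ha, hb, hc⟩ _ ⟨v, rfl⟩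
    rw [key, ha, hb, hc]; simp

end field

section dual
variable {N : ℕ}

lemma dot_nondeg : (dotProductBilin (ZMod 2) (ZMod 2) : LinearMap.BilinForm (ZMod 2) (Fin N → ZMod 2)).Nondegenerate := by
  constructor
  · intro v h; exact dotProduct_eq_zero v h
  · intro v h; exact dotProduct_eq_zero v (fun w => by rw [dotProduct_comm]; exact h w)

lemma dot_refl : (dotProductBilin (ZMod 2) (ZMod 2) : LinearMap.BilinForm (ZMod 2) (Fin N → ZMod 2)).IsRefl := by
  intro v w h
  change w ⬝ᵥ v = 0
  rw [dotProduct_comm]; exact h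

lemma dual_eq (W : Submodule (ZMod 2) (Fin N → ZMod 2)) :
    dualCode (W : Set (Fin N → ZMod 2)) = LinearMap.BilinForm.orthogonal (dotProductBilin (ZMod 2) (ZMod 2)) W := by
  ext y
  constructor
  · intro h c hc
    change c ⬝ᵥ y = 0
    rw [dotProduct_comm]; exact h c hc
  · intro h c hc
    have : c ⬝ᵥ y = 0 := h c hc
    rw [dotProduct_comm] at this; exact this

lemma dual_dual (W : Submodule (ZMod 2) (Fin N → ZMod 2)) :
    dualCode (dualCode (W : Set (Fin N → ZMod 2)) : Set (Fin N → ZMod 2)) = W := by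
  rw [dual_eq, dual_eq, LinearMap.BilinForm.orthogonal_orthogonal dot_nondeg dot_refl]

lemma finrank_dual (W : Submodule (ZMod 2) (Fin N → ZMod 2)) :
    Module.finrank (ZMod 2) (dualCode (W : Set (Fin N → ZMod 2))) =
      N - Module.finrank (ZMod 2) W := by
  rw [dual_eq, LinearMap.BilinForm.finrank_orthogonal dot_nondeg]
  simp

end dual
section weights
variable {F : Type*} [Field F] [Fintype F] [Algebra (ZMod 2) F]

lemma sum_Enc {ι : Type*} [Fintype ι] (σ : F ≃ₐ[ZMod 2] F) (X : ι → F)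
    (hX : Function.Bijective X)
    (B : Submodule (ZMod 2) F) (v : ZMod 2 × F × B) :
    ∑ i, sgn (Enc σ X B v i) = ∑ x, sgn (qf σ v.1 v.2.1 v.2.2 x) :=
  hX.sum_comp (fun x => sgn (qf σ v.1 v.2.1 v.2.2 x))

variable (m e : ℕ) (hm : 4 ≤ m) (he : 2 * e = m) (hF : Fintype.card F = 2 ^ m)
  (σ : F ≃ₐ[ZMod 2] F) (hσ : ∀ x, σ (σ x) = x)
  (X : Fin (2 ^ m) → F) (hX : Function.Bijective X)
  (B : Submodule (ZMod 2) F) (hB : IsCompl (LinearMap.ker (Lmap σ)) B)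

include hB in
lemma Lmap_ne (b : B) (hb : b ≠ 0) : Lmap σ b ≠ 0 := by
  intro h
  have : (b : F) ∈ LinearMap.ker (Lmap σ) ⊓ B := ⟨h, b.2⟩
  rw [hB.inf_eq_bot] at this
  exact hb (by simpa using this)

include hm he hF hσ hX hB in
lemma wt_quad (v : ZMod 2 × F × B) (hv : v.2.2 ≠ 0) :
    hammingNorm (Enc σ X B v) = 2 ^ (m - 1) - 2 ^ ((m - 2) / 2) ∨
    hammingNorm (Enc σ X B v) = 2 ^ (m - 1) + 2 ^ ((m - 2) / 2) := by
  have h := sum_qf_sq σ hσ v.1 v.2.1 v.2.2 (Lmap_ne σ B hB _ hv)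
  rw [← sum_Enc σ X hX, sum_sgn, hF] at h
  obtain ⟨k, rfl⟩ : ∃ k, e = k + 1 := ⟨e - 1, by omega⟩
  subst he
  have h1 : 2 * (k + 1) - 1 = 2 * k + 1 := by omega
  have h2 : (2 * (k + 1) - 2) / 2 = k := by omega
  have h3 : (2 : ℕ) ^ k ≤ 2 ^ (2 * k + 1) := Nat.pow_le_pow_right (by norm_num) (by omega)
  rw [h1, h2]
  simp only [Fintype.card_fin] at h
  have h4 : ((2 ^ (2 * (k + 1)) : ℕ) : ℤ) = ((2 : ℤ) ^ (k + 1)) ^ 2 := by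
    push_cast; ring
  have h6 : (2 ^ (2 * (k + 1)) : ℕ) = 2 * 2 ^ (2 * k + 1) := by ring
  nth_rw 2 [h4] at h
  have h5 : (2 : ℤ) ^ (k + 1) = 2 * ((2 ^ k : ℕ) : ℤ) := by push_cast; ring
  rw [h5] at h
  generalize hammingNorm (Enc σ X B v) = w at h ⊢
  rw [h6] at h
  rcases sq_eq_sq_iff_eq_or_eq_neg.1 h with h | h
  · left; omega
  · right; omega

include hm hX in
lemma wt_lin (v : ZMod 2 × F × B) (hv : v.2.2 = 0) (ha : v.2.1 ≠ 0) :
    hammingNorm (Enc σ X B v) = 2 ^ (m - 1) := by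
  have h := sum_qf_lin σ v.1 v.2.1 ha
  have h0 := sum_Enc σ X hX B v
  rw [hv] at h0
  simp only [Submodule.coe_zero] at h0
  rw [h, sum_sgn] at h0
  obtain ⟨k, rfl⟩ : ∃ k, m = k + 1 := ⟨m - 1, by omega⟩
  simp only [Fintype.card_fin, pow_succ, Nat.add_sub_cancel] at h0 ⊢
  omega

lemma Enc_const (c : ZMod 2) : Enc σ X B (c, 0, 0) = fun _ => c := by
  ext i; simp [Enc, qf]

lemma wt_one {N : ℕ} (y : Fin N → ZMod 2) : hammingNorm y = N ↔ y = 1 := by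
  constructor
  · intro h
    unfold hammingNorm at h
    have := Finset.eq_univ_of_card ({i | y i ≠ 0} : Finset (Fin N)) (by simpa using h)
    ext i
    have hi : i ∈ ({i | y i ≠ 0} : Finset (Fin N)) := by rw [this]; simp
    simpa using (zmod2_ne _).1 (by simpa using hi)
  · rintro rfl
    simp [hammingNorm]

lemma wt_compl {N : ℕ} (y : Fin N → ZMod 2) : hammingNorm (y + 1) + hammingNorm y = N := by
  have h1 := sum_sgn (y + 1)
  have h2 := sum_sgn y
  have h3 : sgn 1 = -1 := by decide
  simp only [Pi.add_apply, sgn_add, Pi.one_apply, h3, ← Finset.sum_mul] at h1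
  simp only [Fintype.card_fin] at h1 h2
  rw [h2] at h1
  omega

include hm in
lemma numerics : 2 ^ ((m - 2) / 2) < 2 ^ (m - 1) ∧ 0 < 2 ^ ((m - 2) / 2) ∧
    2 ^ m = 2 * 2 ^ (m - 1) := by
  refine ⟨Nat.pow_lt_pow_right (by norm_num) (by omega), by positivity, ?_⟩
  rw [← pow_succ']; congr 1; omega

include hm he hF hσ hX hB in
lemma Enc_inj : Function.Injective (Enc σ X B) := by
  rw [← LinearMap.ker_eq_bot, LinearMap.ker_eq_bot']
  intro v hv
  have h0 : hammingNorm (Enc σ X B v) = 0 := by rw [hv]; simp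
  obtain ⟨n1, n2, n3⟩ := numerics m hm
  by_cases hb : v.2.2 = 0
  · by_cases ha : v.2.1 = 0
    · obtain ⟨c, a, b⟩ := v
      simp only at ha hb
      subst ha hb
      rw [Enc_const] at hv
      have := congrFun hv ⟨0, by positivity⟩
      simp only [Pi.zero_apply] at this
      rw [this]; rfl
    · have := wt_lin m hm σ X hX B v hb ha
      omega
  · have := wt_quad m e hm he hF σ hσ X hX B hB v hb
    omega

include hm he hF hσ hX hB in
lemma wt_cases (v : ZMod 2 × F × B) :
    hammingNorm (Enc σ X B v) ∈ ({0, 2 ^ (m - 1) - 2 ^ ((m - 2) / 2), 2 ^ (m - 1),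
        2 ^ (m - 1) + 2 ^ ((m - 2) / 2), 2 ^ m} : Set ℕ) := by
  simp only [Set.mem_insert_iff, Set.mem_singleton_iff]
  by_cases hb : v.2.2 = 0
  · by_cases ha : v.2.1 = 0
    · obtain ⟨c, a, b⟩ := v
      simp only at ha hb
      subst ha hb
      rw [Enc_const]
      by_cases hc : c = 0
      · left; subst hc; exact hammingNorm_zero
      · rw [← ne_eq, zmod2_ne] at hc
        right; right; right; right
        rw [wt_one]; subst hc; rfl
    · have := wt_lin m hm σ X hX B v hb ha
      tauto
  · have := wt_quad m e hm he hF σ hσ X hX B hB v hb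
    tauto

lemma image_eq {V : Type*} {N : ℕ} (f : V → (Fin N → ZMod 2)) (W : Set (Fin N → ZMod 2))
    (hW : W = Set.range f) (hf : Function.Injective f) (P : (Fin N → ZMod 2) → Prop) :
    {y | y ∈ W ∧ P y}.ncard = {v | P (f v)}.ncard := by
  rw [← Set.ncard_image_of_injective _ hf]
  congr 1
  ext y
  subst hW
  constructor
  · rintro ⟨⟨v, rfl⟩, h⟩; exact ⟨v, h, rfl⟩
  · rintro ⟨v, h, rfl⟩; exact ⟨⟨v, rfl⟩, h⟩

lemma finrank_of_card (hF : Fintype.card F = 2 ^ m) : Module.finrank (ZMod 2) F = m := by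
  have h := Module.card_eq_pow_finrank (K := ZMod 2) (V := F)
  rw [hF, ZMod.card] at h
  exact (Nat.pow_right_injective (le_refl 2) h).symm

include hm he hF hσ hB in
lemma finrank_B (h1 : ∃ u, σ u ≠ u) : Module.finrank (ZMod 2) B = e := by
  have h2 := finrank_ker σ hσ h1
  have h3 := Submodule.finrank_add_eq_of_isCompl hB
  rw [finrank_of_card m hF] at h2 h3
  omega

include hm he hF hσ hB in
lemma card_B (h1 : ∃ u, σ u ≠ u) : Nat.card B = 2 ^ e := by
  rw [Module.natCard_eq_pow_finrank (K := ZMod 2), finrank_B m e hm he hF σ hσ B hB h1]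
  simp

include hm he hF hσ hX hB in
lemma count_mid : {v | hammingNorm (Enc σ X B v) = 2 ^ (m - 1)}.ncard = 2 ^ (m + 1) - 2 := by
  obtain ⟨n1, n2, n3⟩ := numerics m hm
  have : {v | hammingNorm (Enc σ X B v) = 2 ^ (m - 1)} =
      (Set.univ : Set (ZMod 2)) ×ˢ (({0}ᶜ : Set F) ×ˢ ({0} : Set B)) := by
    ext v
    simp only [Set.mem_ofPred_eq, Set.mem_prod, Set.mem_univ, true_and, Set.mem_compl_iff,
      Set.mem_singleton_iff]
    constructor
    · intro h
      by_cases hb : v.2.2 = 0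
      · refine ⟨fun ha => ?_, hb⟩
        obtain ⟨c, a, b⟩ := v
        simp only at ha hb
        subst ha hb
        rw [Enc_const] at h
        by_cases hc : c = 0
        · subst hc
          have : hammingNorm (fun _ : Fin (2 ^ m) => (0 : ZMod 2)) = 0 := hammingNorm_zero
          omega
        · rw [← ne_eq, zmod2_ne] at hc
          subst hc
          have : hammingNorm (fun _ : Fin (2 ^ m) => (1 : ZMod 2)) = 2 ^ m := (wt_one _).2 rfl
          omega
      · have := wt_quad m e hm he hF σ hσ X hX B hB v hb
        omega
    · rintro ⟨ha, hb⟩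
      exact wt_lin m hm σ X hX B v hb ha
  rw [this, Set.ncard_prod, Set.ncard_prod, Set.ncard_compl, Set.ncard_univ]
  simp only [Nat.card_eq_fintype_card, ZMod.card, Set.ncard_singleton, hF]
  rw [pow_succ]; omega

include hm he hF hσ hX hB in
lemma count_quad (h1 : ∃ u, σ u ≠ u) :
    {v | hammingNorm (Enc σ X B v) = 2 ^ (m - 1) - 2 ^ ((m - 2) / 2)}.ncard =
      (2 ^ (m / 2) - 1) * 2 ^ m ∧
    {v | hammingNorm (Enc σ X B v) = 2 ^ (m - 1) + 2 ^ ((m - 2) / 2)}.ncard =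
      (2 ^ (m / 2) - 1) * 2 ^ m := by
  obtain ⟨n1, n2, n3⟩ := numerics m hm
  set S1 := {v | hammingNorm (Enc σ X B v) = 2 ^ (m - 1) - 2 ^ ((m - 2) / 2)} with hS1
  set S2 := {v | hammingNorm (Enc σ X B v) = 2 ^ (m - 1) + 2 ^ ((m - 2) / 2)} with hS2
  have hcomp : ∀ v : ZMod 2 × F × B,
      hammingNorm (Enc σ X B (v + (1, 0, 0))) + hammingNorm (Enc σ X B v) = 2 ^ m := by
    intro v
    rw [map_add, Enc_const]
    exact wt_compl _
  have hinv : ∀ v : ZMod 2 × F × B, v + (1, 0, 0) + (1, 0, 0) = v := by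
    intro v
    rw [add_assoc]
    have : ((1, 0, 0) + (1, 0, 0) : ZMod 2 × F × B) = 0 := by
      ext <;> simp; decide
    rw [this, add_zero]
  have heq : S1.ncard = S2.ncard := by
    rw [← Set.ncard_image_of_injective S1 (add_left_injective ((1, 0, 0) : ZMod 2 × F × B))]
    congr 1
    ext v
    simp only [Set.mem_image, hS1, hS2, Set.mem_ofPred_eq]
    constructor
    · rintro ⟨w, hw, rfl⟩
      have := hcomp w; omega
    · intro hv
      refine ⟨v + (1, 0, 0), ?_, hinv v⟩
      have := hcomp v; omega
  have hun : S1 ∪ S2 = (Set.univ : Set (ZMod 2)) ×ˢ ((Set.univ : Set F) ×ˢ ({0}ᶜ : Set B)) := by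
    ext v
    simp only [Set.mem_union, Set.mem_ofPred_eq, hS1, hS2, Set.mem_prod, Set.mem_univ, true_and,
      Set.mem_compl_iff, Set.mem_singleton_iff]
    constructor
    · intro h hb
      by_cases ha : v.2.1 = 0
      · obtain ⟨c, a, b⟩ := v
        simp only at ha hb
        subst ha hb
        rw [Enc_const] at h
        by_cases hc : c = 0
        · subst hc
          have : hammingNorm (fun _ : Fin (2 ^ m) => (0 : ZMod 2)) = 0 := hammingNorm_zero
          omega
        · rw [← ne_eq, zmod2_ne] at hc
          subst hc
          have : hammingNorm (fun _ : Fin (2 ^ m) => (1 : ZMod 2)) = 2 ^ m := (wt_one _).2 rfl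
          omega
      · have := wt_lin m hm σ X hX B v hb ha
        omega
    · exact wt_quad m e hm he hF σ hσ X hX B hB v
  have hdis : Disjoint S1 S2 := by
    rw [Set.disjoint_left]
    intro v h1 h2
    simp only [hS1, hS2, Set.mem_ofPred_eq] at h1 h2
    omega
  have hc := Set.ncard_union_eq hdis (Set.toFinite _) (Set.toFinite _)
  rw [hun, Set.ncard_prod, Set.ncard_prod, Set.ncard_compl, Set.ncard_univ, Set.ncard_univ,
    card_B m e hm he hF σ hσ B hB h1] at hc
  simp only [Nat.card_eq_fintype_card, ZMod.card, Set.ncard_singleton, hF] at hc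
  have he2 : m / 2 = e := by omega
  rw [he2, mul_comm (2 ^ e - 1)]
  constructor <;> omega

end weights
section concrete

lemma sum_castLE {M : Type*} [AddCommMonoid M] (N : ℕ) (hN : 0 < N) (f : Fin N → M)
    (hf : ∀ i : Fin N, ¬ (i : ℕ) < N - 1 → f i = 0) :
    ∑ i : Fin (N - 1), f (Fin.castLE (Nat.sub_le _ _) i) = ∑ i, f i := by
  obtain ⟨n, rfl⟩ : ∃ n, N = n + 1 := ⟨N - 1, by omega⟩
  rw [Fin.sum_univ_castSucc, hf (Fin.last n) (by simp), add_zero]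
  rfl

/-- The coordinate labels of the extended code. -/
noncomputable def Xc (m : ℕ) (α : GaloisField 2 m) (i : Fin (2 ^ m)) : GaloisField 2 m :=
  if (i : ℕ) < 2 ^ m - 1 then α ^ (i : ℕ) else 0

lemma Xc_bij (m : ℕ) (hm : 4 ≤ m) (α : GaloisField 2 m) (hα : orderOf α = 2 ^ m - 1)
    [Fintype (GaloisField 2 m)] (hF : Fintype.card (GaloisField 2 m) = 2 ^ m) :
    Function.Bijective (Xc m α) := by
  rw [Fintype.bijective_iff_injective_and_card]
  refine ⟨?_, by simp [hF]⟩
  have h16 : 2 ^ 4 ≤ 2 ^ m := Nat.pow_le_pow_right (by norm_num) hm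
  have h0 : α ≠ 0 := by
    rintro rfl
    rw [orderOf_zero] at hα
    omega
  intro i j h
  unfold Xc at h
  have hi := i.2
  have hj := j.2
  split_ifs at h with h1 h2 h2
  · exact Fin.ext (pow_injOn_Iio_orderOf (by simpa [hα] using h1) (by simpa [hα] using h2) h)
  · exact absurd h (pow_ne_zero _ h0)
  · exact absurd h.symm (pow_ne_zero _ h0)
  · ext; omega

/-- The power `x ↦ x ^ (2 ^ e)` of Frobenius. -/
noncomputable def frobE (m e : ℕ) : GaloisField 2 m ≃ₐ[ZMod 2] GaloisField 2 m :=
  (FiniteField.frobeniusAlgEquivOfAlgebraic (ZMod 2) (GaloisField 2 m)) ^ e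

lemma frobE_apply (m e : ℕ) (x : GaloisField 2 m) : frobE m e x = x ^ (2 ^ e) := by
  unfold frobE
  rw [AlgEquiv.coe_pow, FiniteField.coe_frobeniusAlgEquivOfAlgebraic_iterate]
  simp

variable (m e : ℕ) (hm : 4 ≤ m) (he : 2 * e = m)
    (α : GaloisField 2 m) (hα : orderOf α = 2 ^ m - 1)

include hm in
lemma gf_pow (x : GaloisField 2 m) : x ^ (2 ^ m) = x := by
  letI := Fintype.ofFinite (GaloisField 2 m)
  have h := GaloisField.card 2 m (by omega)
  rw [Nat.card_eq_fintype_card] at h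
  rw [← h, FiniteField.pow_card]

include hm he in
lemma frobE_sq (x : GaloisField 2 m) : frobE m e (frobE m e x) = x := by
  rw [frobE_apply, frobE_apply, ← pow_mul, ← pow_add, ← two_mul, he, gf_pow m hm]

include hm he hα in
lemma frobE_ne : frobE m e α ≠ α := by
  intro h
  rw [frobE_apply] at h
  have hq : 2 ^ 2 ≤ 2 ^ e := Nat.pow_le_pow_right (by norm_num) (by omega)
  have hqm : 2 ^ m = 2 ^ e * 2 ^ e := by rw [← pow_add, ← two_mul, he]
  have hlt : 2 ^ e < 2 ^ m - 1 := by rw [hqm]; have := Nat.mul_le_mul hq (le_refl (2 ^ e)); omega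
  have := pow_injOn_Iio_orderOf (x := α) (x₁ := 2 ^ e) (x₂ := 1) (by simpa [hα] using hlt)
    (by simp [hα]; omega) (by simpa using h)
  omega

lemma beta_eq (x : GaloisField 2 m) : x ^ (1 + 2 ^ e) = x * frobE m e x := by
  rw [frobE_apply, pow_add, pow_one]

include hm he in
lemma beta_fixed (x : GaloisField 2 m) : frobE m e (x ^ (1 + 2 ^ e)) = x ^ (1 + 2 ^ e) := by
  rw [beta_eq, map_mul, frobE_sq m e hm he, mul_comm]

include hm he hα in
lemma coprime_min : IsCoprime (minpoly (ZMod 2) α) (minpoly (ZMod 2) (α ^ (1 + 2 ^ e))) := by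
  have hi : ∀ x : GaloisField 2 m, IsIntegral (ZMod 2) x := fun x => Algebra.IsIntegral.isIntegral x
  rw [(minpoly.irreducible (hi α)).coprime_iff_not_dvd]
  intro h
  have h1 : minpoly (ZMod 2) (α ^ (1 + 2 ^ e)) ∣ (X ^ (2 ^ e) - X : (ZMod 2)[X]) := by
    apply minpoly.dvd
    have := beta_fixed m e hm he α
    rw [frobE_apply] at this
    rw [map_sub, map_pow, aeval_X, this, sub_self]
  have h2 : aeval α (X ^ (2 ^ e) - X : (ZMod 2)[X]) = 0 := by
    rw [← minpoly.dvd_iff]; exact h.trans h1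
  rw [map_sub, map_pow, aeval_X, sub_eq_zero] at h2
  exact frobE_ne m e hm he α hα (by rw [frobE_apply]; exact h2)

lemma aeval_codePoly {n : ℕ} (c : Fin n → ZMod 2) (β : GaloisField 2 m) :
    aeval β (codePoly c) = ∑ i, c i • β ^ (i : ℕ) := by
  simp [codePoly, map_sum, Algebra.smul_def]

include hm he hα in
lemma mem_CEbar (c : Fin (2 ^ m) → ZMod 2) : c ∈ CEbar m e α ↔
    (∑ i, c i = 0 ∧ ∑ i, c i • Xc m α i = 0 ∧
      ∑ i, c i • (Xc m α i * frobE m e (Xc m α i)) = 0) := by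
  have hg : ∀ p : (ZMod 2)[X], gE m e α ∣ p ↔ aeval α p = 0 ∧ aeval (α ^ (1 + 2 ^ e)) p = 0 := by
    intro p
    rw [← minpoly.dvd_iff, ← minpoly.dvd_iff]
    constructor
    · intro h
      exact ⟨(dvd_mul_right _ _).trans h, (dvd_mul_left _ _).trans h⟩
    · rintro ⟨h1, h2⟩
      exact (coprime_min m e hm he α hα).mul_dvd h1 h2
  have hs1 : ∑ i : Fin (2 ^ m - 1), c (Fin.castLE (Nat.sub_le _ _) i) • α ^ (i : ℕ) =
      ∑ i, c i • Xc m α i := by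
    rw [← sum_castLE (2 ^ m) (by positivity)]
    · refine Finset.sum_congr rfl fun i _ => ?_
      simp [Xc]
    · intro i hi
      simp [Xc, hi]
  have hs2 : ∑ i : Fin (2 ^ m - 1), c (Fin.castLE (Nat.sub_le _ _) i) •
      (α ^ (1 + 2 ^ e)) ^ (i : ℕ) = ∑ i, c i • (Xc m α i * frobE m e (Xc m α i)) := by
    rw [← sum_castLE (2 ^ m) (by positivity)]
    · refine Finset.sum_congr rfl fun i _ => ?_
      rw [beta_eq, mul_pow]
      simp [Xc]
    · intro i hi
      simp [Xc, hi]
  have : c ∈ CEbar m e α ↔ (gE m e α ∣ codePoly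
    (fun i : Fin (2 ^ m - 1) => c (Fin.castLE (Nat.sub_le _ _) i)) ∧ ∑ i, c i = 0) := Iff.rfl
  rw [this, hg, aeval_codePoly, aeval_codePoly, hs1, hs2]
  tauto

lemma sum_supp {M : Type*} [AddCommGroup M] [Module (ZMod 2) M] {N : ℕ} (c : Fin N → ZMod 2)
    (g : Fin N → M) : ∑ i, c i • g i = ∑ i with c i ≠ 0, g i := by
  rw [Finset.sum_filter]
  refine Finset.sum_congr rfl fun i _ => ?_
  split_ifs with h
  · rw [zmod2_ne] at h; rw [h, one_smul]
  · rw [not_not] at h; rw [h, zero_smul]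

include hm he hα in
lemma min_four : IsLeast {i | ∃ c ∈ CEbar m e α, c ≠ 0 ∧ hammingNorm c = i} 4 := by
  classical
  letI := Fintype.ofFinite (GaloisField 2 m)
  have hF := GaloisField.card 2 m (by omega)
  rw [Nat.card_eq_fintype_card] at hF
  have hX := Xc_bij m hm α hα hF
  constructor
  · set y := α ^ (1 + 2 ^ e) with hy
    have hfix : frobE m e y = y := beta_fixed m e hm he α
    have hq : 2 ^ 2 ≤ 2 ^ e := Nat.pow_le_pow_right (by norm_num) (by omega)
    have hqm : 2 ^ m = 2 ^ e * 2 ^ e := by rw [← pow_add, ← two_mul, he]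
    have hlt : 1 + 2 ^ e < 2 ^ m - 1 := by
      rw [hqm]; have := Nat.mul_le_mul hq (le_refl (2 ^ e)); omega
    have hy1 : y ≠ 1 := by
      intro h
      have := orderOf_dvd_of_pow_eq_one h
      rw [hα] at this
      have := Nat.le_of_dvd (by omega) this
      omega
    have hy0 : y ≠ 0 := by
      intro h
      have : α = 0 := by simpa using (pow_eq_zero_iff (by omega)).1 h
      rw [this, orderOf_zero] at hα
      omega
    have hyy : y + 1 ≠ 0 := fun h => hy1 (eq_of_add_zero h)
    have h4 : y + 1 ≠ y := by simp
    have h5 : y + 1 ≠ 1 := by simpa using hy0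
    set S : Finset (GaloisField 2 m) := {0, 1, y, y + 1} with hS
    have hn1 : (0 : GaloisField 2 m) ∉ ({1, y, y + 1} : Finset (GaloisField 2 m)) := by
      simp [hy0.symm, hyy.symm]
    have hn2 : (1 : GaloisField 2 m) ∉ ({y, y + 1} : Finset (GaloisField 2 m)) := by
      simp only [Finset.mem_insert, Finset.mem_singleton, not_or]
      exact ⟨hy1.symm, h5.symm⟩
    have hn3 : y ∉ ({y + 1} : Finset (GaloisField 2 m)) := by simp
    have hcard : S.card = 4 := by
      rw [hS, Finset.card_insert_of_notMem hn1, Finset.card_insert_of_notMem hn2,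
        Finset.card_insert_of_notMem hn3, Finset.card_singleton]
    let c : Fin (2 ^ m) → ZMod 2 := fun i => if Xc m α i ∈ S then 1 else 0
    have hsum : ∀ {M : Type} [AddCommGroup M] [Module (ZMod 2) M] (g : GaloisField 2 m → M),
        ∑ i, c i • g (Xc m α i) = ∑ x ∈ S, g x := by
      intro M _ _ g
      rw [hX.sum_comp (fun x => (if x ∈ S then (1 : ZMod 2) else 0) • g x)]
      simp only [ite_smul, one_smul, zero_smul]
      rw [Finset.sum_ite_mem, Finset.univ_inter]
    have hw : hammingNorm c = 4 := by
      rw [← hcard]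
      unfold hammingNorm
      rw [← Finset.card_map ⟨Xc m α, hX.1⟩]
      congr 1
      ext x
      obtain ⟨i, rfl⟩ := hX.2 x
      simp [c, hX.1.eq_iff]
    refine ⟨c, ?_, ?_, hw⟩
    · rw [mem_CEbar m e hm he α hα]
      refine ⟨?_, ?_, ?_⟩
      · have := hsum (fun _ => (1 : ZMod 2))
        simp only [smul_eq_mul, mul_one, Finset.sum_const, hcard] at this
        rw [this]; decide
      · rw [hsum (fun x => x), hS, Finset.sum_insert hn1, Finset.sum_insert hn2,
          Finset.sum_insert hn3, Finset.sum_singleton]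
        linear_combination char2 y + char2 (1 : GaloisField 2 m)
      · rw [hsum (fun x => x * frobE m e x), hS, Finset.sum_insert hn1, Finset.sum_insert hn2,
          Finset.sum_insert hn3, Finset.sum_singleton]
        simp only [map_add, map_one, map_zero, hfix]
        linear_combination (char2 (y * y)) + char2 y + char2 (1 : GaloisField 2 m)
    · intro h
      rw [h, hammingNorm_zero] at hw
      omega
  · rintro w ⟨c, hc, hc0, rfl⟩
    rw [mem_CEbar m e hm he α hα] at hc
    obtain ⟨h1, h2, -⟩ := hc
    by_contra hlt
    push Not at hlt
    have h3 : ((hammingNorm c : ℕ) : ZMod 2) = 0 := by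
      rw [← h1]
      have := sum_supp c (fun _ => (1 : ZMod 2))
      simp only [smul_eq_mul, mul_one] at this
      rw [this]
      simp [hammingNorm]
    rw [ZMod.natCast_eq_zero_iff] at h3
    have h4 : hammingNorm c ≠ 0 := by rwa [hammingNorm_ne_zero_iff]
    have h5 : hammingNorm c = 2 := by omega
    unfold hammingNorm at h5
    obtain ⟨i, j, hij, hs⟩ := Finset.card_eq_two.1 h5
    rw [sum_supp, hs, Finset.sum_pair hij] at h2
    exact hij (hX.1 (eq_of_add_zero h2))

end concrete

/-- Let `m ≥ 4` be even and `e = m/2`. Then `C̄_E^⊥` has dimension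
`1 + 3m/2`, minimum nonzero weight `2^{m−1} − 2^{(m−2)/2}`, and the stated weight
distribution, with no codewords of other weights; moreover `C̄_E` has dimension
`2^m − 1 − 3m/2` and minimum nonzero weight `4`. -/
theorem dual_code_parameters_case_b
    (m e : ℕ) (hm : 4 ≤ m) (he : 2 * e = m)
    (α : GaloisField 2 m) (hα : orderOf α = 2 ^ m - 1) :
    Module.finrank (ZMod 2) ↥(dualCode (CEbar m e α)) = 1 + 3 * m / 2 ∧
    IsLeast {i | ∃ y ∈ dualCode (CEbar m e α), y ≠ 0 ∧ hammingNorm y = i}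
      (2 ^ (m - 1) - 2 ^ ((m - 2) / 2)) ∧
    {y : Fin (2 ^ m) → ZMod 2 |
      y ∈ dualCode (CEbar m e α) ∧ hammingNorm y = 0}.ncard = 1 ∧
    {y : Fin (2 ^ m) → ZMod 2 | y ∈ dualCode (CEbar m e α) ∧
      hammingNorm y = 2 ^ (m - 1) - 2 ^ ((m - 2) / 2)}.ncard =
        (2 ^ (m / 2) - 1) * 2 ^ m ∧
    {y : Fin (2 ^ m) → ZMod 2 | y ∈ dualCode (CEbar m e α) ∧
      hammingNorm y = 2 ^ (m - 1)}.ncard = 2 ^ (m + 1) - 2 ∧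
    {y : Fin (2 ^ m) → ZMod 2 | y ∈ dualCode (CEbar m e α) ∧
      hammingNorm y = 2 ^ (m - 1) + 2 ^ ((m - 2) / 2)}.ncard =
        (2 ^ (m / 2) - 1) * 2 ^ m ∧
    {y : Fin (2 ^ m) → ZMod 2 | y ∈ dualCode (CEbar m e α) ∧
      hammingNorm y = 2 ^ m}.ncard = 1 ∧
    (∀ y ∈ dualCode (CEbar m e α), hammingNorm y ∈
      ({0, 2 ^ (m - 1) - 2 ^ ((m - 2) / 2), 2 ^ (m - 1),
        2 ^ (m - 1) + 2 ^ ((m - 2) / 2), 2 ^ m} : Set ℕ)) ∧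
    Module.finrank (ZMod 2) ↥(CEbarSub m e α) = 2 ^ m - 1 - 3 * m / 2 ∧
    IsLeast {i | ∃ c ∈ CEbar m e α, c ≠ 0 ∧ hammingNorm c = i} 4 := by
  classical
  let _ := Fintype.ofFinite (GaloisField 2 m)
  have hF := GaloisField.card 2 m (by omega)
  rw [Nat.card_eq_fintype_card] at hF
  have hX := Xc_bij m hm α hα hF
  have hσ := frobE_sq m e hm he
  have h1 : ∃ u, frobE m e u ≠ u := ⟨α, frobE_ne m e hm he α hα⟩
  obtain ⟨B, hB⟩ := Submodule.exists_isCompl (LinearMap.ker (Lmap (frobE m e)))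
  set E := Enc (frobE m e) (Xc m α) B with hE
  have hinj : Function.Injective E := Enc_inj m e hm he hF _ hσ _ hX B hB
  have hC : CEbarSub m e α = dualCode (LinearMap.range E : Set (Fin (2 ^ m) → ZMod 2)) := by
    ext c
    rw [mem_dual_Enc _ hσ h1 _ B hB, ← mem_CEbar m e hm he α hα]
    rfl
  have hC' : CEbar m e α = (dualCode (LinearMap.range E : Set (Fin (2 ^ m) → ZMod 2)) :
      Set (Fin (2 ^ m) → ZMod 2)) := by
    rw [← hC]; rfl
  have hD : dualCode (CEbar m e α) = LinearMap.range E := by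
    rw [hC', dual_dual]
  have hdim : Module.finrank (ZMod 2) (LinearMap.range E) = 1 + 3 * m / 2 := by
    rw [LinearMap.finrank_range_of_inj hinj, Module.finrank_prod, Module.finrank_prod,
      finrank_of_card m hF, finrank_B m e hm he hF _ hσ B hB h1, Module.finrank_self]
    omega
  have hcnt : ∀ w, {y : Fin (2 ^ m) → ZMod 2 | y ∈ dualCode (CEbar m e α) ∧
      hammingNorm y = w}.ncard = {v | hammingNorm (E v) = w}.ncard := by
    intro w
    refine image_eq E (dualCode (CEbar m e α) : Set (Fin (2 ^ m) → ZMod 2)) ?_ hinj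
      (fun y => hammingNorm y = w)
    rw [hD]; rfl
  obtain ⟨hq1, hq2⟩ := count_quad m e hm he hF _ hσ _ hX B hB h1
  have hwt : ∀ y ∈ dualCode (CEbar m e α), hammingNorm y ∈
      ({0, 2 ^ (m - 1) - 2 ^ ((m - 2) / 2), 2 ^ (m - 1),
        2 ^ (m - 1) + 2 ^ ((m - 2) / 2), 2 ^ m} : Set ℕ) := by
    intro y hy
    rw [hD] at hy
    obtain ⟨v, rfl⟩ := hy
    exact wt_cases m e hm he hF _ hσ _ hX B hB v
  obtain ⟨n1, n2, n3⟩ := numerics m hm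
  have h1E : (1 : Fin (2 ^ m) → ZMod 2) ∈ dualCode (CEbar m e α) := by
    rw [hD]; exact ⟨(1, 0, 0), Enc_const _ _ _ B 1⟩
  refine ⟨by rw [hD, hdim], ⟨?_, ?_⟩, ?_, by rw [hcnt]; exact hq1,
    by rw [hcnt]; exact count_mid m e hm he hF _ hσ _ hX B hB,
    by rw [hcnt]; exact hq2, ?_, hwt, ?_, min_four m e hm he α hα⟩
  · have hpos : 0 < (2 ^ (m / 2) - 1) * 2 ^ m := by
      have : 2 ^ 1 ≤ 2 ^ (m / 2) := Nat.pow_le_pow_right (by norm_num) (by omega)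
      exact Nat.mul_pos (by omega) (by positivity)
    rw [← hq1] at hpos
    obtain ⟨v, hv⟩ := (Set.ncard_pos (Set.toFinite _)).1 hpos
    have hv : hammingNorm (E v) = 2 ^ (m - 1) - 2 ^ ((m - 2) / 2) := hv
    refine ⟨E v, by rw [hD]; exact ⟨v, rfl⟩, ?_, hv⟩
    intro h
    rw [h, hammingNorm_zero] at hv
    omega
  · rintro w ⟨y, hy, hy0, rfl⟩
    have h := hwt y hy
    have h0 : hammingNorm y ≠ 0 := by rwa [hammingNorm_ne_zero_iff]
    simp only [Set.mem_insert_iff, Set.mem_singleton_iff] at h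
    omega
  · rw [Set.ncard_eq_one]
    refine ⟨0, ?_⟩
    ext y
    simp only [Set.mem_ofPred_eq, hammingNorm_eq_zero, Set.mem_singleton_iff]
    constructor
    · exact fun h => h.2
    · rintro rfl; exact ⟨Submodule.zero_mem _, rfl⟩
  · rw [Set.ncard_eq_one]
    refine ⟨1, ?_⟩
    ext y
    simp only [Set.mem_ofPred_eq, wt_one, Set.mem_singleton_iff]
    constructor
    · exact fun h => h.2
    · rintro rfl; exact ⟨h1E, rfl⟩
  · rw [hC, finrank_dual, hdim]
    omega
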